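/- arXiv:2105.05422 — 4 statements merged into one kernel-verified Lean document; each statement's English description precedes it below -/
import Mathlib

section
/- If a lens (g, γ) : B ⇌ C has underlying functor g an injective-on-objects discrete opfibration, then it is a monomorphism in the category of small categories and lenses: for any lenses (f, φ), (f', φ') : A ⇌ B, if the composite of (f, φ) with (g, γ) equals the composite of (f', φ') with (g, γ) as lenses, then (f, φ) = (f', φ'). -/
open CategoryTheory

universe u

/-- A functor `F` is a discrete opfibration if for every object `a` of its domain and
every morphism `u : F.obj a ⟶ b` of its codomain, there exists a unique morphism `w`
with domain `a` such that `F.map w = u` (up to the identification of codomains). -/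
def IsDiscreteOpfibration {A B : Type u} [SmallCategory A] [SmallCategory B]
    (F : A ⥤ B) : Prop :=
  ∀ ⦃a : A⦄ ⦃b : B⦄ (u : F.obj a ⟶ b),
    ∃! w : Σ a' : A, a ⟶ a', ∃ h : F.obj w.1 = b, F.map w.2 = u ≫ eqToHom h.symm

/-- A (delta) lens between small categories: a functor together with a lifting
operation satisfying the three lens axioms. `lift u` packages the codomain
`a'` of the chosen lift together with the lift `a ⟶ a'` itself. -/
structure Lens (A B : Type u) [SmallCategory A] [SmallCategory B] where
  /-- the underlying (Get) functor -/
  func : A ⥤ B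
  /-- the lifting (Put) operation -/
  lift : ∀ ⦃a : A⦄ ⦃b : B⦄, (func.obj a ⟶ b) → Σ a' : A, a ⟶ a'
  /-- the codomain of the lift lies over the codomain of the lifted morphism -/
  lift_cod : ∀ ⦃a : A⦄ ⦃b : B⦄ (u : func.obj a ⟶ b), func.obj (lift u).1 = b
  /-- axiom (1): `f (φ (a, u)) = u` -/
  lift_map : ∀ ⦃a : A⦄ ⦃b : B⦄ (u : func.obj a ⟶ b),
      func.map (lift u).2 = u ≫ eqToHom (lift_cod u).symm
  /-- axiom (2): `φ (a, 1) = 1` -/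
  lift_id : ∀ a : A, lift (𝟙 (func.obj a)) = ⟨a, 𝟙 a⟩
  /-- axiom (3): `φ (a, v ∘ u) = φ (a', v) ∘ φ (a, u)` -/
  lift_comp : ∀ ⦃a : A⦄ ⦃b c : B⦄ (u : func.obj a ⟶ b) (v : b ⟶ c),
      lift (u ≫ v) = ⟨(lift (eqToHom (lift_cod u) ≫ v)).1,
        (lift u).2 ≫ (lift (eqToHom (lift_cod u) ≫ v)).2⟩

namespace Lens

variable {A B C : Type u} [SmallCategory A] [SmallCategory B] [SmallCategory C]

theorem lift_eqToHom (L : Lens A B) {a a' : A} (h : a' = a) {b : B}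
    (u : L.func.obj a ⟶ b) (h' : L.func.obj a' = L.func.obj a) :
    L.lift (eqToHom h' ≫ u) = ⟨(L.lift u).1, eqToHom h ≫ (L.lift u).2⟩ := by
  subst h; simp

/-- The identity lens on a small category. -/
def id (A : Type u) [SmallCategory A] : Lens A A where
  func := Functor.id A
  lift _ b u := ⟨b, u⟩
  lift_cod _ _ _ := rfl
  lift_map := by intros; simp
  lift_id := by intros; rfl
  lift_comp := by intros; simp

/-- Composition of lenses: `(L.comp M).lift u = L.lift ((M.lift u).2)`. -/
def comp (L : Lens A B) (M : Lens B C) : Lens A C where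
  func := L.func ⋙ M.func
  lift _ _ u := L.lift (M.lift u).2
  lift_cod a c u := by
    show M.func.obj (L.func.obj _) = c
    rw [L.lift_cod]
    exact M.lift_cod u
  lift_map a c u := by
    show M.func.map (L.func.map _) = _
    rw [L.lift_map, Functor.map_comp, M.lift_map, eqToHom_map]
    simp
  lift_id a := by
    show L.lift (M.lift (𝟙 (M.func.obj (L.func.obj a)))).2 = _
    rw [M.lift_id]
    exact L.lift_id a
  lift_comp a c c' u v := by
    show L.lift (M.lift (u ≫ v)).2 = _
    rw [M.lift_comp u v]
    show L.lift ((M.lift u).2 ≫ (M.lift (eqToHom (M.lift_cod u) ≫ v)).2) = _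
    rw [L.lift_comp]
    have key : M.lift (eqToHom (show (L.func ⋙ M.func).obj (L.lift (M.lift u).2).1 = c by
          show M.func.obj (L.func.obj _) = c; rw [L.lift_cod]; exact M.lift_cod u) ≫ v)
        = ⟨(M.lift (eqToHom (M.lift_cod u) ≫ v)).1,
            eqToHom (L.lift_cod (M.lift u).2) ≫ (M.lift (eqToHom (M.lift_cod u) ≫ v)).2⟩ := by
      rw [show (eqToHom (show (L.func ⋙ M.func).obj (L.lift (M.lift u).2).1 = c by
          show M.func.obj (L.func.obj _) = c; rw [L.lift_cod]; exact M.lift_cod u) ≫ v)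
        = eqToHom (congrArg M.func.obj (L.lift_cod (M.lift u).2)) ≫ (eqToHom (M.lift_cod u) ≫ v) by
          rw [← Category.assoc, eqToHom_trans]]
      exact M.lift_eqToHom (L.lift_cod (M.lift u).2) _ _
    beta_reduce
    rw [key]

/-- A lens is a monomorphism in the category of small categories and lenses if it is
left-cancellable with respect to lens composition. -/
def IsMono (f : Lens A B) : Prop :=
  ∀ ⦃D : Type u⦄ [SmallCategory D], ∀ x y : Lens D A, x.comp f = y.comp f → x = y

/-- A lens is an epimorphism in the category of small categories and lenses if it is
right-cancellable with respect to lens composition. -/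
def IsEpi (f : Lens A B) : Prop :=
  ∀ ⦃C : Type u⦄ [SmallCategory C], ∀ x y : Lens B C, f.comp x = f.comp y → x = y

end Lens

/-!
A discrete opfibration `g` is faithful, so injectivity on objects makes it left-cancellable among
functors, which identifies the underlying functors of the two lenses. By uniqueness of lifts,
`γ (b, g w) = w` for every morphism `w` out of `b`, so the lifting `φ` of `f` is recovered from the
lifting `δ` of the composite lens as `φ (a, u) = δ (a, g u)`.
-/

namespace IsDiscreteOpfibration

variable {A B : Type u} [SmallCategory A] [SmallCategory B] {F : A ⥤ B}

theorem sigma_eq_of_map_eq (hF : IsDiscreteOpfibration F) {a b c : A} {u : a ⟶ b} {v : a ⟶ c}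
    (h : F.obj c = F.obj b) (huv : F.map v = F.map u ≫ eqToHom h.symm) :
    (⟨c, v⟩ : Σ a' : A, a ⟶ a') = ⟨b, u⟩ :=
  (hF (F.map u)).unique ⟨h, huv⟩ ⟨rfl, (Category.comp_id _).symm⟩

theorem faithful (hF : IsDiscreteOpfibration F) : F.Faithful where
  map_injective {_ b u v} h := by
    have huv : (⟨b, u⟩ : Σ b' : A, _ ⟶ b') = ⟨b, v⟩ :=
      hF.sigma_eq_of_map_eq rfl (by simpa only [eqToHom_refl, Category.comp_id] using h)
    exact eq_of_heq (Sigma.mk.inj huv).2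

end IsDiscreteOpfibration

theorem functor_eq_of_comp_eq_comp_of_injective_obj {A B C : Type*} [Category* A] [Category* B]
    [Category* C] {F F' : A ⥤ B} (G : B ⥤ C) [G.Faithful] (hG : Function.Injective G.obj)
    (h : F ⋙ G = F' ⋙ G) : F = F' := by
  have hobj (a : A) : F.obj a = F'.obj a := hG (Functor.congr_obj h a)
  refine CategoryTheory.Functor.ext hobj fun a a' m => G.map_injective ?_
  simpa only [Functor.map_comp, eqToHom_map] using! Functor.congr_hom h m

namespace Lens

variable {A B C : Type u} [SmallCategory A] [SmallCategory B] [SmallCategory C]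

theorem ext_of_func_eq {L M : Lens A B} (hfunc : L.func = M.func)
    (hlift : ∀ ⦃a : A⦄ ⦃b : B⦄ (u : L.func.obj a ⟶ b),
      L.lift u = M.lift (eqToHom (Functor.congr_obj hfunc a).symm ≫ u)) : L = M := by
  obtain ⟨F, φ, _, _, _, _⟩ := L
  obtain ⟨F', φ', _, _, _, _⟩ := M
  obtain rfl : F = F' := hfunc
  obtain rfl : φ = φ' := by
    funext a b u
    simpa only [eqToHom_refl, Category.id_comp] using hlift u
  rfl

theorem lift_congr {L M : Lens A B} (h : L = M) {a : A} {b : B} (u : L.func.obj a ⟶ b) :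
    L.lift u = M.lift (eqToHom (by rw [h]) ≫ u) := by
  subst h
  rw [eqToHom_refl, Category.id_comp]

theorem lift_map_of_isDiscreteOpfibration {g : Lens B C} (hg : IsDiscreteOpfibration g.func)
    {b b' : B} (u : b ⟶ b') : g.lift (g.func.map u) = ⟨b', u⟩ :=
  hg.sigma_eq_of_map_eq (g.lift_cod _) (g.lift_map _)

theorem comp_lift_map_of_isDiscreteOpfibration (f : Lens A B) {g : Lens B C}
    (hg : IsDiscreteOpfibration g.func) {a : A} {b : B} (u : f.func.obj a ⟶ b) :
    (f.comp g).lift (g.func.map u) = f.lift u := by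
  change f.lift (g.lift (g.func.map u)).2 = f.lift u
  rw [lift_map_of_isDiscreteOpfibration hg]

end Lens

/-- A lens whose underlying functor is an injective-on-objects discrete opfibration is a
monomorphism in the category of small categories and lenses. -/
theorem lens_mono_of_injective_dopf {B C : Type u} [SmallCategory B] [SmallCategory C]
    (g : Lens B C) (hinj : Function.Injective g.func.obj)
    (hdopf : IsDiscreteOpfibration g.func) :
    ∀ ⦃A : Type u⦄ [SmallCategory A],
      ∀ f f' : Lens A B, f.comp g = f'.comp g → f = f' := by
  intro A _ f f' h
  have := hdopf.faithful
  have hfunc : f.func = f'.func :=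
    functor_eq_of_comp_eq_comp_of_injective_obj g.func hinj (congrArg Lens.func h)
  refine Lens.ext_of_func_eq hfunc fun a b u => ?_
  have hobj : f'.func.obj a = f.func.obj a := (Functor.congr_obj hfunc a).symm
  calc f.lift u
      = (f.comp g).lift (g.func.map u) :=
        (f.comp_lift_map_of_isDiscreteOpfibration hdopf u).symm
    _ = (f'.comp g).lift (eqToHom (congrArg g.func.obj hobj) ≫ g.func.map u) :=
        Lens.lift_congr h _
    _ = (f'.comp g).lift (g.func.map (eqToHom hobj ≫ u)) := by
        rw [Functor.map_comp, eqToHom_map]; rfl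
    _ = f'.lift (eqToHom hobj ≫ u) :=
        f'.comp_lift_map_of_isDiscreteOpfibration hdopf _
end

section
/- A lens (f, φ) : A ⇌ B is a monomorphism in the category of small categories and lenses (left-cancellable with respect to lens composition) if and only if its underlying functor f is an injective-on-objects discrete opfibration, if and only if f is injective on objects and injective on morphisms. -/
open CategoryTheory

universe u

/-!
A lens is a functor together with a section of the map it induces on stars, the sets of morphisms
out of a fixed object. Its functor is therefore a discrete opfibration precisely when these maps
are injective, which for a functor injective on objects means that it is faithful. In that case
every morphism `w` is the chosen lift of its image, so composites with the lens remember all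
lifts: `(x.comp f).lift (f.func.map w) = x.lift w`. Conversely, the strict fibre product of the
functor of a lens with itself has projections that are lenses equalised by it. A monomorphism
identifies these projections, hence any two objects, and any two parallel morphisms, with the
same image.
-/

theorem functor_star_eq_mk_iff {C : Type*} [Category* C] {D : Type*} [Category* D] {F : C ⥤ D}
    {c : C} {s : Quiver.Star c} {d : D} {u : F.obj c ⟶ d} :
    F.toPrefunctor.star c s = ⟨d, u⟩ ↔ ∃ h : F.obj s.1 = d, F.map s.2 = u ≫ eqToHom h.symm := by
  constructor
  · rintro ⟨⟩
    exact ⟨rfl, (Category.comp_id _).symm⟩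
  · rintro ⟨rfl, h⟩
    exact congrArg Quiver.Star.mk (h.trans (Category.comp_id u))

theorem isDiscreteOpfibration_iff_star_bijective {A B : Type u} [SmallCategory A]
    [SmallCategory B] {F : A ⥤ B} :
    IsDiscreteOpfibration F ↔ ∀ a, Function.Bijective (F.toPrefunctor.star a) := by
  simp only [Function.bijective_iff_existsUnique, Sigma.forall]
  exact forall₃_congr fun _ _ _ => existsUnique_congr fun _ => functor_star_eq_mk_iff.symm

section InjectiveOnObjects

variable {C : Type*} [Category* C] {D : Type*} [Category* D] {E : Type*} [Category* E]
  {F : C ⥤ D}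

theorem functor_faithful_of_star_injective (hF : ∀ c, Function.Injective (F.toPrefunctor.star c)) :
    F.Faithful where
  map_injective {c _ _ _} h :=
    sigma_mk_injective (hF c (congrArg Quiver.Star.mk h))

theorem functor_star_injective_of_injective_obj (hF : Function.Injective F.obj) [F.Faithful]
    (c : C) : Function.Injective (F.toPrefunctor.star c) := by
  rintro ⟨c', v⟩ ⟨c'', w⟩ h
  obtain rfl : c' = c'' := hF (congrArg Sigma.fst h)
  exact congrArg Quiver.Star.mk (F.map_injective (sigma_mk_injective h))

theorem functor_eq_of_comp_eq (hF : Function.Injective F.obj) [F.Faithful]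
    {G H : E ⥤ C} (h : G ⋙ F = H ⋙ F) : G = H :=
  CategoryTheory.Functor.ext (fun e => hF (CategoryTheory.Functor.congr_obj h e)) fun _ _ k =>
    F.map_injective (by
      simpa [eqToHom_map] using CategoryTheory.Functor.congr_hom h k)

end InjectiveOnObjects

namespace Lens

variable {A B C : Type u} [SmallCategory A] [SmallCategory B] [SmallCategory C]

theorem star_lift (f : Lens A B) {a : A} {b : B} (u : f.func.obj a ⟶ b) :
    f.func.toPrefunctor.star a (f.lift u) = ⟨b, u⟩ :=
  functor_star_eq_mk_iff.mpr ⟨f.lift_cod u, f.lift_map u⟩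

theorem star_surjective (f : Lens A B) (a : A) : Function.Surjective (f.func.toPrefunctor.star a) :=
  fun ⟨_, u⟩ => ⟨f.lift u, f.star_lift u⟩

/-- The chosen lift at `a` of a morphism `u : b ⟶ b'` whose domain `b` is only propositionally
equal to the image of `a`. In this form the lens axioms need no transport. -/
def liftOver (f : Lens A B) {a : A} {b b' : B} (h : f.func.obj a = b) (u : b ⟶ b') :
    Quiver.Star a :=
  f.lift (eqToHom h ≫ u)

section LiftOver

variable (f : Lens A B) {a : A} {b b' b'' : B} (h : f.func.obj a = b)

theorem liftOver_cod (u : b ⟶ b') : f.func.obj (f.liftOver h u).1 = b' :=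
  f.lift_cod _

theorem map_liftOver (u : b ⟶ b') :
    f.func.map (f.liftOver h u).2 = eqToHom h ≫ u ≫ eqToHom (f.liftOver_cod h u).symm :=
  (f.lift_map _).trans (Category.assoc _ _ _)

theorem liftOver_rfl (u : f.func.obj a ⟶ b) : f.liftOver rfl u = f.lift u :=
  congrArg (f.lift ·) (Category.id_comp u)

theorem liftOver_eqToHom_comp (h' : b = b') (u : b' ⟶ b'') :
    f.liftOver h (eqToHom h' ≫ u) = f.liftOver (h.trans h') u :=
  congrArg (f.lift ·) (eqToHom_trans_assoc h h' u)

theorem liftOver_id : f.liftOver h (𝟙 b) = ⟨a, 𝟙 a⟩ := by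
  subst h
  rw [liftOver_rfl, f.lift_id]

theorem liftOver_comp (u : b ⟶ b') (v : b' ⟶ b'') :
    f.liftOver h (u ≫ v) = ⟨(f.liftOver (f.liftOver_cod h u) v).1,
      (f.liftOver h u).2 ≫ (f.liftOver (f.liftOver_cod h u) v).2⟩ := by
  rw [liftOver, ← Category.assoc, f.lift_comp]
  rfl

end LiftOver

theorem liftOver_map_lift (f : Lens A C) (g : Lens B C) {a : A} {b : B} {c : C}
    (h : f.func.obj a = g.func.obj b) (u : g.func.obj b ⟶ c) :
    f.liftOver h (g.func.map (g.lift u).2) = f.liftOver h u :=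
  congrArg (fun s : Quiver.Star (g.func.obj b) => f.liftOver h s.2) (g.star_lift u)

theorem eq_iff {f g : Lens A B} :
    f = g ↔ ∃ h : f.func = g.func, ∀ (a : A) (b : B) (u : g.func.obj a ⟶ b),
      f.liftOver (CategoryTheory.Functor.congr_obj h a) u = g.lift u := by
  refine ⟨by rintro rfl; exact ⟨rfl, fun _ _ => liftOver_rfl _⟩, fun ⟨h, h_lift⟩ => ?_⟩
  obtain ⟨F, l, _, _, _, _⟩ := f
  obtain ⟨G, m, _, _, _, _⟩ := g
  obtain rfl : F = G := h
  obtain rfl : l = m := by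
    funext a b u
    simpa [liftOver] using h_lift a b u
  rfl

theorem isDiscreteOpfibration_iff_faithful {f : Lens A B}
    (hf : Function.Injective f.func.obj) :
    IsDiscreteOpfibration f.func ↔ f.func.Faithful := by
  rw [isDiscreteOpfibration_iff_star_bijective]
  exact ⟨fun h => functor_faithful_of_star_injective fun a => (h a).injective,
    fun _ a => ⟨functor_star_injective_of_injective_obj hf a, f.star_surjective a⟩⟩

theorem lift_map_of_star_injective {f : Lens A B} {a : A}
    (hf : Function.Injective (f.func.toPrefunctor.star a)) {a' : A} (w : a ⟶ a') :
    f.lift (f.func.map w) = ⟨a', w⟩ :=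
  hf (f.star_lift _)

theorem comp_lift_map_of_star_injective (x : Lens C A) {f : Lens A B} {c : C}
    (hf : Function.Injective (f.func.toPrefunctor.star (x.func.obj c))) {a : A}
    (w : x.func.obj c ⟶ a) : (x.comp f).lift (f.func.map w) = x.lift w :=
  congrArg (fun s : Quiver.Star (x.func.obj c) => x.lift s.2) (lift_map_of_star_injective hf w)

theorem isMono_of_injective_obj {f : Lens A B} (hf : Function.Injective f.func.obj)
    [f.func.Faithful] : f.IsMono := by
  intro D _ x y hxy
  obtain ⟨h_comp, h_lift⟩ := eq_iff.mp hxy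
  have h_func : x.func = y.func := functor_eq_of_comp_eq hf h_comp
  have h_star := functor_star_injective_of_injective_obj (F := f.func) hf
  refine eq_iff.mpr ⟨h_func, fun d a v => ?_⟩
  have h_obj := CategoryTheory.Functor.congr_obj h_func d
  calc
    x.liftOver h_obj v
    _ = (x.comp f).lift (f.func.map (eqToHom h_obj ≫ v)) :=
      (comp_lift_map_of_star_injective x (h_star _) _).symm
    _ = (x.comp f).liftOver (CategoryTheory.Functor.congr_obj h_comp d) (f.func.map v) := by
      rw [f.func.map_comp, eqToHom_map]
      rfl
    _ = (y.comp f).lift (f.func.map v) := h_lift d _ _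
    _ = y.lift v := comp_lift_map_of_star_injective y (h_star _) v

end Lens

/-- The strict fibre product of two functors with a common codomain: pairs of objects with equal
images. -/
structure FibreProduct {A B C : Type*} [Category* A] [Category* B] [Category* C]
    (F : A ⥤ C) (G : B ⥤ C) where
  left : A
  right : B
  w : F.obj left = G.obj right

namespace FibreProduct

section Functors

variable {A B C : Type*} [Category* A] [Category* B] [Category* C] {F : A ⥤ C} {G : B ⥤ C}

/-- The inclusion of the fibre product into the comma category, as the full subcategory on the
objects whose structure morphism is an identity. Morphisms of the fibre product are defined through
it, so they are pairs of morphisms with the same image. -/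
def toComma (p : FibreProduct F G) : Comma F G :=
  ⟨p.left, p.right, eqToHom p.w⟩

instance : Category (FibreProduct F G) :=
  inferInstanceAs (Category (InducedCategory (Comma F G) toComma))

/-- The first projection functor of the fibre product. -/
def fst (F : A ⥤ C) (G : B ⥤ C) : FibreProduct F G ⥤ A where
  obj p := p.left
  map k := k.hom.left

/-- The second projection functor of the fibre product. -/
def snd (F : A ⥤ C) (G : B ⥤ C) : FibreProduct F G ⥤ B where
  obj p := p.right
  map k := k.hom.right

/-- A morphism of the fibre product, given by a pair of morphisms with the same image. -/
def homMk {p q : FibreProduct F G} (u : p.left ⟶ q.left) (v : p.right ⟶ q.right)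
    (w : F.map u ≫ eqToHom q.w = eqToHom p.w ≫ G.map v) : p ⟶ q :=
  InducedCategory.homMk ⟨u, v, w⟩

theorem fst_comp_eq_snd_comp (F : A ⥤ C) (G : B ⥤ C) : fst F G ⋙ F = snd F G ⋙ G :=
  CategoryTheory.Functor.ext_of_iso
    (NatIso.ofComponents (fun p => eqToIso p.w) fun k => k.hom.w) FibreProduct.w

theorem star_ext {p : FibreProduct F G} {s t : Quiver.Star p}
    (h_fst : (fst F G).toPrefunctor.star p s = (fst F G).toPrefunctor.star p t)
    (h_snd : (snd F G).toPrefunctor.star p s = (snd F G).toPrefunctor.star p t) : s = t := by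
  obtain ⟨⟨a, b, _⟩, ⟨⟨u, v, _⟩⟩⟩ := s
  obtain ⟨⟨a', b', _⟩, ⟨⟨u', v', _⟩⟩⟩ := t
  cases h_fst
  cases h_snd
  rfl

theorem injective_obj_of_fst_eq_snd (h : fst F F = snd F F) : Function.Injective F.obj :=
  fun a a' haa' => CategoryTheory.Functor.congr_obj h ⟨a, a', haa'⟩

theorem faithful_of_fst_eq_snd (h : fst F F = snd F F) : F.Faithful where
  map_injective {a a' u v} huv := by
    let k : (⟨a, a, rfl⟩ : FibreProduct F F) ⟶ ⟨a', a', rfl⟩ := homMk u v (by simpa using huv)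
    have h_k : u = eqToHom rfl ≫ v ≫ eqToHom rfl := CategoryTheory.Functor.congr_hom h k
    simpa using h_k

end Functors

variable {A B C : Type u} [SmallCategory A] [SmallCategory B] [SmallCategory C]

/-- The pullback of the lens `g` along the functor `F`: a morphism lifts to its pairing with the
chosen lift under `g` of its image under `F`. -/
def fstLens (F : A ⥤ C) (g : Lens B C) : Lens (FibreProduct F g.func) A where
  func := fst F g.func
  lift p a u :=
    let s := g.liftOver p.w.symm (F.map u)
    ⟨⟨a, s.1, (g.liftOver_cod _ _).symm⟩, homMk u s.2 (by simp [s, g.map_liftOver])⟩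
  lift_cod _ _ _ := rfl
  lift_map _ _ _ := (Category.comp_id _).symm
  lift_id p := star_ext rfl
    ((congrArg (g.liftOver p.w.symm) (F.map_id p.left)).trans (g.liftOver_id p.w.symm))
  lift_comp p a a' (u : p.left ⟶ a) v := by
    have h_uv : u ≫ v = u ≫ 𝟙 a ≫ v := by rw [Category.id_comp]
    refine star_ext (congrArg Quiver.Star.mk h_uv) ?_
    calc
      g.liftOver p.w.symm (F.map (u ≫ v))
      _ = g.liftOver p.w.symm (F.map u ≫ F.map (𝟙 a ≫ v)) := by rw [h_uv, F.map_comp]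
      _ = _ := g.liftOver_comp _ _ _

/-- The pullback of the lens `f` along the functor `G`, the mirror image of `fstLens`. -/
def sndLens (f : Lens A C) (G : B ⥤ C) : Lens (FibreProduct f.func G) B where
  func := snd f.func G
  lift p b v :=
    let s := f.liftOver p.w (G.map v)
    ⟨⟨s.1, b, f.liftOver_cod _ _⟩, homMk s.2 v (by simp [s, f.map_liftOver])⟩
  lift_cod _ _ _ := rfl
  lift_map _ _ _ := (Category.comp_id _).symm
  lift_id p := star_ext
    ((congrArg (f.liftOver p.w) (G.map_id p.right)).trans (f.liftOver_id p.w)) rfl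
  lift_comp p b b' (u : p.right ⟶ b) v := by
    have h_uv : u ≫ v = u ≫ 𝟙 b ≫ v := by rw [Category.id_comp]
    refine star_ext ?_ (congrArg Quiver.Star.mk h_uv)
    calc
      f.liftOver p.w (G.map (u ≫ v))
      _ = f.liftOver p.w (G.map u ≫ G.map (𝟙 b ≫ v)) := by rw [h_uv, G.map_comp]
      _ = _ := f.liftOver_comp _ _ _

theorem fstLens_comp_eq_sndLens_comp (f : Lens A C) (g : Lens B C) :
    (fstLens f.func g).comp f = (sndLens f g.func).comp g := by
  refine Lens.eq_iff.mpr ⟨fst_comp_eq_snd_comp f.func g.func, fun p c u => star_ext ?_ ?_⟩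
  · exact (f.liftOver_map_lift g p.w u).symm
  · change g.liftOver p.w.symm (f.func.map (f.lift (eqToHom p.w ≫ u)).2) = g.lift u
    rw [g.liftOver_map_lift f]
    exact (g.liftOver_eqToHom_comp _ _ u).trans (g.liftOver_rfl u)

end FibreProduct

namespace Lens

theorem isMono_iff {A B : Type u} [SmallCategory A] [SmallCategory B] {f : Lens A B} :
    f.IsMono ↔ Function.Injective f.func.obj ∧ f.func.Faithful := by
  refine ⟨fun hf => ?_, fun ⟨h_obj, _⟩ => isMono_of_injective_obj h_obj⟩
  have h_proj : FibreProduct.fst f.func f.func = FibreProduct.snd f.func f.func :=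
    congrArg func (hf _ _ (FibreProduct.fstLens_comp_eq_sndLens_comp f f))
  exact ⟨FibreProduct.injective_obj_of_fst_eq_snd h_proj,
    FibreProduct.faithful_of_fst_eq_snd h_proj⟩

end Lens

/-- A lens is a monomorphism in the category of small categories and lenses iff its
underlying functor is an injective-on-objects discrete opfibration, iff its underlying
functor is injective on objects and injective on morphisms. -/
theorem lens_mono_characterisation {A B : Type u} [SmallCategory A] [SmallCategory B]
    (f : Lens A B) :
    (f.IsMono ↔ (Function.Injective f.func.obj ∧ IsDiscreteOpfibration f.func)) ∧
    (f.IsMono ↔ (Function.Injective f.func.obj ∧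
      ∀ ⦃a a' : A⦄ (u v : a ⟶ a'), f.func.map u = f.func.map v → u = v)) := by
  rw [Lens.isMono_iff]
  exact ⟨and_congr_right fun h_obj => (Lens.isDiscreteOpfibration_iff_faithful h_obj).symm,
    and_congr_right fun _ => ⟨fun _ _ _ _ _ h => f.func.map_injective h, fun h => ⟨h _ _⟩⟩⟩
end

section
/- A lens (f, φ) : A ⇌ B is an epimorphism in the category of small categories and lenses (right-cancellable with respect to lens composition) if and only if its underlying functor f is surjective on objects, if and only if f is surjective on morphisms. -/
open CategoryTheory

universe u

/-! A lens that is surjective on objects is surjective on morphisms, so its functor is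
right-cancellable among functors. It is then right-cancellable among lenses because its lifting
operation is injective.

For the converse, a global section `s` of a set-valued functor `F` on `B` gives a lens
`b ↦ (b, s b)` from `B` to the category of elements of `F`, and the composite of `f : A ⇌ B` with
this lens depends only on the values of `s` on the image of `f`. Hence, if `f` is epi, sections that
agree on the image of `f` are equal. Let `F b` consist of the sets of morphisms out of `b`. The
section of all morphisms and the section of those morphisms whose codomain lies in the image of `f`
agree on the image of `f`, which is closed under outgoing morphisms. So they agree at every `b`, and
the identity of `b` shows that `b` is in the image. -/

section CategoryOfElements

universe w

variable {A B : Type*} [Category* A] [Category* B] {F : B ⥤ Type w}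

theorem elements_eqToHom_comp_val {p q r : F.Elements} (h : p = q) (v : q ⟶ r) :
    (eqToHom h ≫ v).val = eqToHom (congrArg Sigma.fst h) ≫ v.val := by
  subst h
  simp

theorem elements_comp_eqToHom_val {p q r : F.Elements} (v : p ⟶ q) (h : q = r) :
    (v ≫ eqToHom h).val = v.val ≫ eqToHom (congrArg Sigma.fst h) := by
  subst h
  simp

/-- The lift of a functor `G` along the projection `F.Elements ⥤ B` determined by a global section
of `G ⋙ F`. -/
def elementsLift (G : A ⥤ B) (s : (G ⋙ F).sections) : A ⥤ F.Elements where
  obj a := F.elementsMk (G.obj a) (s.1 a)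
  map u := CategoryOfElements.homMk _ _ (G.map u) (s.2 u)

end CategoryOfElements

/-- The functor sending `b` to the type of sets of morphisms out of `b`, acting by inverse image
along precomposition. A morphism out of `b` is encoded together with its codomain. -/
def outgoingSets (B : Type*) [Category* B] : B ⥤ Type _ where
  obj b := Set (Σ c, b ⟶ c)
  map v := ↾fun S => {w | ⟨w.1, v ≫ w.2⟩ ∈ S}

/-- The section of `outgoingSets B` selecting the morphisms whose codomain lies in `S`. -/
def outgoingInto {B : Type*} [Category* B] (S : Set B) : (outgoingSets B).sections :=
  ⟨fun _ => {w | w.1 ∈ S}, fun _ => rfl⟩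

namespace Lens

variable {A B : Type u} [SmallCategory A] [SmallCategory B]

theorem eq_iff_s12 {L M : Lens A B} :
    L = M ↔ ∃ hF : L.func = M.func, ∀ ⦃a : A⦄ ⦃b : B⦄ (v : L.func.obj a ⟶ b),
      L.lift v = M.lift (eqToHom (Functor.congr_obj hF a).symm ≫ v) := by
  refine ⟨?_, fun ⟨hF, hlift⟩ => ?_⟩
  · rintro rfl
    simp
  · obtain ⟨F, l, _, _, _, _⟩ := L
    obtain ⟨G, m, _, _, _, _⟩ := M
    obtain rfl : F = G := hF
    obtain rfl : l = m := by
      funext a b v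
      simpa using hlift v
    rfl

theorem surjective_obj_iff_surjective_map (L : Lens A B) :
    Function.Surjective L.func.obj ↔
      ∀ ⦃b b' : B⦄ (v : b ⟶ b'), ∃ (a a' : A) (u : a ⟶ a')
        (h : L.func.obj a = b) (h' : L.func.obj a' = b'),
        L.func.map u = eqToHom h ≫ v ≫ eqToHom h'.symm := by
  refine ⟨fun hL b b' v => ?_, fun hL b => ?_⟩
  · obtain ⟨a, rfl⟩ := hL b
    exact ⟨a, (L.lift v).1, (L.lift v).2, rfl, L.lift_cod v, by simp [L.lift_map]⟩
  · obtain ⟨a, _, _, h, _⟩ := hL (𝟙 b)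
    exact ⟨a, h⟩

theorem eq_of_func_comp_eq {C : Type*} [Category* C] (L : Lens A B)
    (hL : Function.Surjective L.func.obj) {G H : B ⥤ C} (h : L.func ⋙ G = L.func ⋙ H) :
    G = H := by
  have hobj (b : B) : G.obj b = H.obj b := by
    obtain ⟨a, rfl⟩ := hL b
    exact Functor.congr_obj h a
  refine Functor.hext hobj fun b b' v => ?_
  obtain ⟨a, a', u, rfl, rfl, hu⟩ := L.surjective_obj_iff_surjective_map.mp hL v
  obtain rfl : L.func.map u = v := by simpa using hu
  exact Functor.hcongr_hom h u

theorem lift_injective (L : Lens A B) (a : A) :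
    Function.Injective fun w : Σ b, L.func.obj a ⟶ b => L.lift w.2 := by
  refine Function.LeftInverse.injective
    (g := fun w : Σ a', a ⟶ a' => ⟨L.func.obj w.1, L.func.map w.2⟩) fun ⟨b, v⟩ => ?_
  refine Sigma.ext (L.lift_cod v) ?_
  simp [L.lift_map]

theorem isEpi_of_surjective_obj (L : Lens A B) (hL : Function.Surjective L.func.obj) :
    L.IsEpi := by
  intro C _ M N h
  obtain ⟨hfunc, hlift⟩ := eq_iff_s12.mp h
  refine eq_iff_s12.mpr ⟨L.eq_of_func_comp_eq hL hfunc, fun b c v => ?_⟩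
  obtain ⟨a, rfl⟩ := hL b
  exact L.lift_injective a (hlift v)

section Sections

variable {F : B ⥤ Type u}

/-- The lens `b ↦ (b, s b)` into the category of elements of `F` given by a global section `s`.
A morphism out of `(b, s b)` necessarily ends at `(b', s b')`, so it lifts to the underlying
morphism `b ⟶ b'`. -/
def ofSection (s : F.sections) : Lens B F.Elements where
  func := elementsLift (𝟭 B) s
  lift _ q v := ⟨q.1, v.val⟩
  lift_cod _ _ v := Sigma.ext rfl (heq_of_eq ((s.2 v.val).symm.trans v.2))
  lift_map _ _ v := CategoryOfElements.ext F _ _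
    ((elements_comp_eqToHom_val v _).trans (Category.comp_id _)).symm
  lift_id _ := rfl
  lift_comp b q r u v := congrArg (fun w : q.1 ⟶ r.1 => (⟨r.1, u.val ≫ w⟩ : Σ b', b ⟶ b'))
    ((elements_eqToHom_comp_val (p := (elementsLift (𝟭 B) s).obj q.1) _ v).trans
      (Category.id_comp _)).symm

theorem comp_ofSection_congr (L : Lens A B) {s t : F.sections}
    (h : L.func.sectionsPrecomp s = L.func.sectionsPrecomp t) :
    L.comp (ofSection s) = L.comp (ofSection t) := by
  have hfunc : (L.comp (ofSection s)).func = (L.comp (ofSection t)).func :=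
    congrArg (elementsLift L.func) h
  refine eq_iff_s12.mpr ⟨hfunc, fun a q v => ?_⟩
  have hobj := (Functor.congr_obj hfunc a).symm
  have hv : v.val = (eqToHom hobj ≫ v).val :=
    ((elements_eqToHom_comp_val hobj v).trans (Category.id_comp _)).symm
  exact congrArg (fun w : L.func.obj a ⟶ q.1 => L.lift w) hv

theorem IsEpi.injective_sectionsPrecomp {L : Lens A B} (hL : L.IsEpi) :
    Function.Injective (L.func.sectionsPrecomp (P := F)) := by
  intro s t h
  have hfunc : (ofSection s).func = (ofSection t).func :=
    congrArg func (hL _ _ (L.comp_ofSection_congr h))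
  ext b
  exact eq_of_heq (Sigma.mk.inj (Functor.congr_obj hfunc b)).2

end Sections

theorem IsEpi.surjective_obj {L : Lens A B} (hL : L.IsEpi) :
    Function.Surjective L.func.obj := by
  have hagree : L.func.sectionsPrecomp (outgoingInto (Set.range L.func.obj)) =
      L.func.sectionsPrecomp (outgoingInto Set.univ) := by
    ext a
    exact Set.eq_univ_of_forall fun w => ⟨(L.lift w.2).1, L.lift_cod w.2⟩
  have hsection : outgoingInto (Set.range L.func.obj) = outgoingInto Set.univ :=
    hL.injective_sectionsPrecomp hagree
  intro b
  have hb : {w : Σ c, b ⟶ c | w.1 ∈ Set.range L.func.obj} = Set.univ :=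
    congrFun (congrArg Subtype.val hsection) b
  exact Set.eq_univ_iff_forall.mp hb ⟨b, 𝟙 b⟩

end Lens

/-- A lens is an epimorphism in the category of small categories and lenses iff its
underlying functor is surjective on objects, iff its underlying functor is surjective
on morphisms. -/
theorem lens_epi_characterisation {A B : Type u} [SmallCategory A] [SmallCategory B]
    (f : Lens A B) :
    (f.IsEpi ↔ Function.Surjective f.func.obj) ∧
    (f.IsEpi ↔ ∀ ⦃b b' : B⦄ (v : b ⟶ b'), ∃ (a a' : A) (u : a ⟶ a')
        (h : f.func.obj a = b) (h' : f.func.obj a' = b'),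
        f.func.map u = eqToHom h ≫ v ≫ eqToHom h'.symm) := by
  have hobj : f.IsEpi ↔ Function.Surjective f.func.obj :=
    ⟨fun hf => hf.surjective_obj, f.isEpi_of_surjective_obj⟩
  exact ⟨hobj, hobj.trans f.surjective_obj_iff_surjective_map⟩
end

section
/- Every lens (f, φ) : A ⇌ B factors as a surjective-on-objects lens followed by a cosieve: there exist a small category I, a lens (e, ε) : A ⇌ I with e surjective on objects, and a lens (m, μ) : I ⇌ B with m an injective-on-objects discrete opfibration, such that the composite of (e, ε) followed by (m, μ) equals (f, φ) as lenses. -/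
open CategoryTheory

universe u

/-! A lens lifts every morphism out of an object in its image, so the codomain of such a morphism
is again in the image. Hence the full subcategory of `B` on the image is a cosieve, and the lens
corestricts to it with the same lifts. -/

namespace Lens

variable {A B : Type u} [SmallCategory A] [SmallCategory B]

theorem isDiscreteOpfibration_of_obj_injective (L : Lens A B) [L.func.Faithful]
    (hL : Function.Injective L.func.obj) : IsDiscreteOpfibration L.func := by
  intro a b u
  refine ⟨L.lift u, ⟨L.lift_cod u, L.lift_map u⟩, ?_⟩
  rintro ⟨a', w⟩ ⟨ha', hw⟩
  have cod_eq : a' = (L.lift u).1 := hL (ha'.trans (L.lift_cod u).symm)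
  have hom_eq : w ≫ eqToHom cod_eq = (L.lift u).2 := by
    apply L.func.map_injective
    rw [L.func.map_comp, hw, eqToHom_map, Category.assoc, eqToHom_trans, L.lift_map]
  exact Sigma.ext cod_eq ((comp_eqToHom_heq w cod_eq).symm.trans (heq_of_eq hom_eq))

/-- The image of a lens on objects, up to equality rather than isomorphism, as a property of
objects of `B`. -/
abbrev image (L : Lens A B) : ObjectProperty B :=
  ObjectProperty.ofObj L.func.obj

instance image_inheritedFromSource (L : Lens A B) : L.image.InheritedFromSource ⊤ where
  of_hom_of_source := by
    rintro _ c u - ⟨a⟩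
    exact (ObjectProperty.ofObj_iff _ c).2 ⟨(L.lift u).1, L.lift_cod u⟩

section FullSubcategory

variable (P : ObjectProperty B)

/-- The inclusion of a full subcategory as a lens, provided that every morphism out of an object
of the subcategory has its target there. -/
def fullSubcategoryInclusion [P.InheritedFromSource ⊤] : Lens P.FullSubcategory B where
  func := P.ι
  lift x b u :=
    ⟨⟨b, P.of_hom_of_source (Q := ⊤) u (MorphismProperty.top_apply u) x.property⟩,
      ObjectProperty.homMk u⟩
  lift_cod _ _ _ := rfl
  lift_map _ _ _ := by simp
  lift_id _ := rfl
  lift_comp _ _ _ _ _ := by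
    simp only [eqToHom_refl, Category.id_comp]
    rfl

theorem fullSubcategoryInclusion_obj_injective [P.InheritedFromSource ⊤] :
    Function.Injective (fullSubcategoryInclusion P).func.obj :=
  fun _ _ h => ObjectProperty.FullSubcategory.ext h

theorem isDiscreteOpfibration_fullSubcategoryInclusion [P.InheritedFromSource ⊤] :
    IsDiscreteOpfibration (fullSubcategoryInclusion P).func :=
  haveI : (fullSubcategoryInclusion P).func.Faithful := P.faithful_ι
  isDiscreteOpfibration_of_obj_injective _ (fullSubcategoryInclusion_obj_injective P)

variable (L : Lens A B) {P}

/-- The corestriction of a lens to a full subcategory containing its image, with the same lifts. -/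
def codRestrict (hP : ∀ a, P (L.func.obj a)) : Lens A P.FullSubcategory where
  func := P.lift L.func hP
  lift _ _ u := L.lift u.hom
  lift_cod _ _ u := ObjectProperty.FullSubcategory.ext (L.lift_cod u.hom)
  lift_map _ _ u := by
    apply ObjectProperty.hom_ext
    rw [ObjectProperty.FullSubcategory.comp_hom, ObjectProperty.eqToHom_hom]
    exact L.lift_map u.hom
  lift_id a := L.lift_id a
  lift_comp _ _ _ u v := by
    rw [ObjectProperty.FullSubcategory.comp_hom, ObjectProperty.FullSubcategory.comp_hom,
      ObjectProperty.eqToHom_hom]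
    exact L.lift_comp u.hom v.hom

theorem codRestrict_obj_surjective (hP : ∀ a, P (L.func.obj a)) (le_image : P ≤ L.image) :
    Function.Surjective (L.codRestrict hP).func.obj := by
  rintro ⟨b, hb⟩
  obtain ⟨a⟩ := le_image b hb
  exact ⟨a, rfl⟩

theorem codRestrict_comp_fullSubcategoryInclusion [P.InheritedFromSource ⊤]
    (hP : ∀ a, P (L.func.obj a)) :
    (L.codRestrict hP).comp (fullSubcategoryInclusion P) = L :=
  rfl

end FullSubcategory

end Lens

/-- Every lens factors as a surjective-on-objects lens (an epimorphism) followed by a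
cosieve, i.e. a lens whose underlying functor is an injective-on-objects discrete
opfibration (a monomorphism). -/
theorem lens_factorisation {A B : Type u} [SmallCategory A] [SmallCategory B]
    (f : Lens A B) :
    ∃ (I : Cat.{u, u}) (e : Lens A I) (m : Lens I B),
      Function.Surjective e.func.obj ∧
      Function.Injective m.func.obj ∧ IsDiscreteOpfibration m.func ∧
      e.comp m = f := by
  exact ⟨Cat.of f.image.FullSubcategory, f.codRestrict (ObjectProperty.ofObj_apply _),
    Lens.fullSubcategoryInclusion f.image,
    f.codRestrict_obj_surjective _ le_rfl,
    Lens.fullSubcategoryInclusion_obj_injective _,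
    Lens.isDiscreteOpfibration_fullSubcategoryInclusion _,
    f.codRestrict_comp_fullSubcategoryInclusion _⟩
end
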